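/- Suppose the joint distribution of (S, W, U_1,…,U_K, Y) is invariant under every permutation of the indices {1,…,K} applied simultaneously to the U-coordinates. Then min over nonempty subsets A ⊆ {1,…,K} of (1/|A|)·I(U_A; Y, U_{K∖A} | S, W) equals (1/K)·I(U_{1..K}; Y | S, W). -/

import Mathlib

open scoped BigOperators Classical

/-- Shannon entropy (base 2) of a p.m.f. on a finite alphabet. -/
noncomputable def ent {α : Type*} [Fintype α] (p : α → ℝ) : ℝ :=
  -∑ a, p a * Real.logb 2 (p a)

/-- Distribution (pushforward p.m.f.) of a random variable `X` under `μ`. -/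
noncomputable def pushf {Ω α : Type*} [Fintype Ω] (μ : Ω → ℝ) (X : Ω → α) : α → ℝ :=
  fun a => ∑ ω ∈ Finset.univ.filter (fun ω => X ω = a), μ ω

/-- Shannon entropy of a random variable. -/
noncomputable def entRV {Ω α : Type*} [Fintype Ω] [Fintype α] (μ : Ω → ℝ) (X : Ω → α) : ℝ :=
  ent (pushf μ X)

/-- Conditional entropy `H(X|Z)`. -/
noncomputable def centRV {Ω α β : Type*} [Fintype Ω] [Fintype α] [Fintype β]
    (μ : Ω → ℝ) (X : Ω → α) (Z : Ω → β) : ℝ :=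
  entRV μ (fun ω => (X ω, Z ω)) - entRV μ Z

/-- Mutual information `I(X;Y)`. -/
noncomputable def mi {Ω α β : Type*} [Fintype Ω] [Fintype α] [Fintype β]
    (μ : Ω → ℝ) (X : Ω → α) (Y : Ω → β) : ℝ :=
  entRV μ X + entRV μ Y - entRV μ (fun ω => (X ω, Y ω))

/-- Conditional mutual information `I(X;Y|Z)`. -/
noncomputable def cmi {Ω α β γ : Type*} [Fintype Ω] [Fintype α] [Fintype β] [Fintype γ]
    (μ : Ω → ℝ) (X : Ω → α) (Y : Ω → β) (Z : Ω → γ) : ℝ :=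
  centRV μ X Z + centRV μ Y Z - centRV μ (fun ω => (X ω, Y ω)) Z

/-- Kullback–Leibler divergence (base 2). -/
noncomputable def kl {α : Type*} [Fintype α] (p q : α → ℝ) : ℝ :=
  ∑ a, p a * Real.logb 2 (p a / q a)

/-- `μ` is a probability mass function. -/
def IsPMF {Ω : Type*} [Fintype Ω] (μ : Ω → ℝ) : Prop :=
  (∀ ω, 0 ≤ μ ω) ∧ ∑ ω, μ ω = 1

/-!
Write `F T = H(U_T, Z)` and `G T = H(U_T, Y, Z)`. By the chain rule,
`I(U_A; Y, U_{Aᶜ} | Z) = F A + G Aᶜ - G univ - F ∅`. Nonnegativity of conditional mutual information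
makes `F` and `G` submodular, and exchangeability makes them depend only on the cardinality of their
argument, so both are concave sequences in that cardinality and lie above their chords. The chord
bounds for `F` at `A` and for `G` at `Aᶜ` add up to
`|A| * I(U; Y | Z) ≤ K * I(U_A; Y, U_{Aᶜ} | Z)`, with equality at `A = univ`.
-/

section Concave

variable {𝕜 : Type*} [CommRing 𝕜] [LinearOrder 𝕜] [IsStrictOrderedRing 𝕜]

theorem chord_le_of_second_difference_nonpos {n : ℕ} {g : ℕ → 𝕜}
    (hg : ∀ m, m + 2 ≤ n → g (m + 2) + g m ≤ 2 * g (m + 1)) {k : ℕ} (hk : k ≤ n) :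
    k * g n + (n - k) * g 0 ≤ n * g k := by
  obtain rfl | hkn := hk.eq_or_lt
  · simp
  set d : ℕ → 𝕜 := fun i => g (i + 1) - g i
  have hd : AntitoneOn d (Set.Iio n) :=
    antitoneOn_of_add_one_le Set.ordConnected_Iio fun m _ _ hm => by
      linarith [hg m hm]
  have first_increments : k * d k ≤ g k - g 0 := by
    have h := Finset.card_nsmul_le_sum (Finset.range k) d (d k) fun i hi =>
      hd ((Finset.mem_range.1 hi).trans hkn) hkn (Finset.mem_range.1 hi).le
    rwa [Finset.sum_range_sub, Finset.card_range, nsmul_eq_mul] at h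
  have last_increments : g n - g k ≤ (n - k) * d k := by
    have h := Finset.sum_le_card_nsmul (Finset.Ico k n) d (d k) fun i hi =>
      hd hkn (Finset.mem_Ico.1 hi).2 (Finset.mem_Ico.1 hi).1
    rwa [Finset.sum_Ico_sub g hk, Nat.card_Ico, nsmul_eq_mul, Nat.cast_sub hk] at h
  have hk₀ : (0 : 𝕜) ≤ k := k.cast_nonneg
  have hnk₀ : (0 : 𝕜) ≤ n - k := sub_nonneg.2 (Nat.cast_le.2 hk)
  linarith [mul_le_mul_of_nonneg_left last_increments hk₀,
    mul_le_mul_of_nonneg_left first_increments hnk₀]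

theorem chord_le_of_submodular_of_factorsThrough_card {ι : Type*} [Fintype ι] [DecidableEq ι]
    {f : Finset ι → 𝕜} (hcard : f.FactorsThrough Finset.card)
    (hsub : ∀ S T, f (S ∪ T) + f (S ∩ T) ≤ f S + f T) (T : Finset ι) :
    T.card * f Finset.univ + (Fintype.card ι - T.card) * f ∅ ≤ Fintype.card ι * f T := by
  obtain ⟨g, rfl⟩ := (Function.factorsThrough_iff f).1 hcard
  refine chord_le_of_second_difference_nonpos (fun m hm => ?_) T.card_le_univ
  obtain ⟨R, -, hR⟩ := Finset.exists_subset_card_eq (s := (Finset.univ : Finset ι)) hm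
  obtain ⟨x, hx, y, hy, hxy⟩ := Finset.one_lt_card.1 (by omega : 1 < R.card)
  have hyx : y ∈ R.erase x := Finset.mem_erase.2 ⟨hxy.symm, hy⟩
  have union_erase : R.erase x ∪ R.erase y = R := by grind
  have inter_erase : R.erase x ∩ R.erase y = (R.erase x).erase y := by grind
  have h := hsub (R.erase x) (R.erase y)
  simp only [Function.comp_apply, union_erase, inter_erase, Finset.card_erase_of_mem, hx, hy, hyx,
    hR] at h
  rwa [two_mul]

end Concave

section Pushforward

variable {Ω α β : Type*} [Fintype Ω] {μ : Ω → ℝ}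

theorem pushf_nonneg (hμ : ∀ ω, 0 ≤ μ ω) (X : Ω → α) (a : α) : 0 ≤ pushf μ X a :=
  Finset.sum_nonneg fun ω _ => hμ ω

theorem le_pushf_apply_self (hμ : ∀ ω, 0 ≤ μ ω) (X : Ω → α) (ω : Ω) :
    μ ω ≤ pushf μ X (X ω) :=
  Finset.single_le_sum (fun ω' _ => hμ ω') (by simp)

theorem pushf_comp_apply (μ : Ω → ℝ) {X : Ω → α} {A : Finset α} (hX : ∀ ω, X ω ∈ A) (g : α → β)
    (b : β) : pushf μ (g ∘ X) b = ∑ a ∈ A with g a = b, pushf μ X a := by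
  rw [pushf, ← Finset.sum_fiberwise_of_maps_to (g := X) (t := {a ∈ A | g a = b}) (by simp [hX])]
  refine Finset.sum_congr rfl fun a ha => Finset.sum_congr ?_ fun _ _ => rfl
  grind

theorem pushf_comp_congr {X X' : Ω → α} (h : pushf μ X = pushf μ X') (g : α → β) :
    pushf μ (g ∘ X) = pushf μ (g ∘ X') := by
  ext b
  rw [pushf_comp_apply μ (A := Finset.univ.image X ∪ Finset.univ.image X') (by simp),
    pushf_comp_apply μ (A := Finset.univ.image X ∪ Finset.univ.image X') (by simp), h]

variable [Fintype α]

theorem sum_pushf_mul (μ : Ω → ℝ) (X : Ω → α) (φ : α → ℝ) :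
    ∑ a, pushf μ X a * φ a = ∑ ω, μ ω * φ (X ω) := by
  rw [← Finset.sum_fiberwise Finset.univ X]
  refine Finset.sum_congr rfl fun a _ => ?_
  rw [pushf, Finset.sum_mul]
  exact Finset.sum_congr rfl fun ω hω => by rw [(Finset.mem_filter.1 hω).2]

theorem sum_pushf (μ : Ω → ℝ) (X : Ω → α) : ∑ a, pushf μ X a = ∑ ω, μ ω := by
  simpa using sum_pushf_mul μ X 1

theorem sum_pushf_prodMk (μ : Ω → ℝ) (X : Ω → α) (Z : Ω → β) (c : β) :
    ∑ a, pushf μ (fun ω => (X ω, Z ω)) (a, c) = pushf μ Z c := by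
  simp only [pushf, Finset.sum_filter]
  rw [Finset.sum_comm]
  simp [ite_and]

end Pushforward

section Entropy

variable {Ω α α' β β' γ : Type*} [Fintype Ω] [Fintype α] [Fintype α'] [Fintype β] [Fintype β']
  [Fintype γ]

theorem entRV_eq_neg_sum_mul_logb (μ : Ω → ℝ) (X : Ω → α) :
    entRV μ X = -∑ ω, μ ω * Real.logb 2 (pushf μ X (X ω)) :=
  congrArg Neg.neg (sum_pushf_mul μ X fun a => Real.logb 2 (pushf μ X a))

theorem entRV_congr (μ : Ω → ℝ) {X : Ω → α} {X' : Ω → α'}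
    (h : ∀ ω ω', X ω = X ω' ↔ X' ω = X' ω') : entRV μ X = entRV μ X' := by
  simp only [entRV_eq_neg_sum_mul_logb, pushf, h]

theorem cmi_congr (μ : Ω → ℝ) {X : Ω → α} {X' : Ω → α'} {Y : Ω → β} {Y' : Ω → β'}
    (Z : Ω → γ)
    (hX : ∀ ω ω', X ω = X ω' ↔ X' ω = X' ω') (hY : ∀ ω ω', Y ω = Y ω' ↔ Y' ω = Y' ω') :
    cmi μ X Y Z = cmi μ X' Y' Z := by
  unfold cmi centRV
  congr 2 <;> congr 1 <;> exact entRV_congr μ (by simp [hX, hY])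

theorem kl_nonneg {p q : α → ℝ} (hp : ∀ a, 0 ≤ p a) (hq : ∀ a, 0 ≤ q a)
    (hpq : ∀ a, q a = 0 → p a = 0) (hsum : ∑ a, q a ≤ ∑ a, p a) : 0 ≤ kl p q := by
  have log_bound (a : α) : (p a - q a) / Real.log 2 ≤ p a * Real.logb 2 (p a / q a) := by
    rw [Real.logb, ← mul_div_assoc]
    gcongr
    obtain hpa | hpa := (hp a).eq_or_lt
    · simpa [← hpa] using hq a
    · have hqa : 0 < q a := (hq a).lt_of_ne' fun h => hpa.ne' (hpq a h)
      calc p a - q a = p a * (1 - (p a / q a)⁻¹) := by field_simp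
        _ ≤ p a * Real.log (p a / q a) := by
          gcongr
          exact Real.one_sub_inv_le_log_of_pos (by positivity)
  calc 0 ≤ (∑ a, p a - ∑ a, q a) / Real.log 2 :=
        div_nonneg (sub_nonneg.2 hsum) (Real.log_nonneg one_le_two)
    _ = ∑ a, (p a - q a) / Real.log 2 := by rw [← Finset.sum_sub_distrib, Finset.sum_div]
    _ ≤ kl p q := Finset.sum_le_sum fun a _ => log_bound a

end Entropy

section CondIndepLaw

variable {Ω α β γ : Type*} [Fintype Ω] {μ : Ω → ℝ}

/-- The law under which `X` and `Y` are independent given `Z` and which has the same marginals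
`(X, Z)` and `(Y, Z)` as `μ`; the junk value `x / 0 = 0` makes it vanish where `Z` has mass zero. -/
noncomputable def condIndepLaw (μ : Ω → ℝ) (X : Ω → α) (Y : Ω → β) (Z : Ω → γ) :
    (α × β) × γ → ℝ :=
  fun t => pushf μ (fun ω => (X ω, Z ω)) (t.1.1, t.2) *
    pushf μ (fun ω => (Y ω, Z ω)) (t.1.2, t.2) / pushf μ Z t.2

theorem condIndepLaw_nonneg (hμ : ∀ ω, 0 ≤ μ ω) (X : Ω → α) (Y : Ω → β)
    (Z : Ω → γ) (t : (α × β) × γ) : 0 ≤ condIndepLaw μ X Y Z t :=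
  div_nonneg (mul_nonneg (pushf_nonneg hμ _ _) (pushf_nonneg hμ _ _)) (pushf_nonneg hμ _ _)

theorem pushf_eq_zero_of_condIndepLaw_eq_zero (hμ : ∀ ω, 0 ≤ μ ω) (X : Ω → α)
    (Y : Ω → β) (Z : Ω → γ) {t : (α × β) × γ} (ht : condIndepLaw μ X Y Z t = 0) :
    pushf μ (fun ω => ((X ω, Y ω), Z ω)) t = 0 := by
  refine Finset.sum_eq_zero fun ω hω => (hμ ω).antisymm' (le_of_not_gt fun hpos => ?_)
  obtain rfl : ((X ω, Y ω), Z ω) = t := by simpa using hω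
  have hXZ := hpos.trans_le (le_pushf_apply_self hμ (fun ω => (X ω, Z ω)) ω)
  have hYZ := hpos.trans_le (le_pushf_apply_self hμ (fun ω => (Y ω, Z ω)) ω)
  have hZ := hpos.trans_le (le_pushf_apply_self hμ Z ω)
  exact (div_pos (mul_pos hXZ hYZ) hZ).ne' ht

variable [Fintype α] [Fintype β] [Fintype γ]

theorem sum_condIndepLaw (μ : Ω → ℝ) (X : Ω → α) (Y : Ω → β) (Z : Ω → γ) :
    ∑ t, condIndepLaw μ X Y Z t = ∑ ω, μ ω :=
  calc ∑ t, condIndepLaw μ X Y Z t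
      = ∑ c, (∑ a, pushf μ (fun ω => (X ω, Z ω)) (a, c)) *
          (∑ b, pushf μ (fun ω => (Y ω, Z ω)) (b, c)) / pushf μ Z c := by
        rw [Fintype.sum_prod_type_right]
        simp only [condIndepLaw, ← Finset.sum_div, Fintype.sum_prod_type, Finset.sum_mul_sum]
    _ = ∑ c, pushf μ Z c := by simp only [sum_pushf_prodMk, mul_self_div_self]
    _ = ∑ ω, μ ω := sum_pushf μ Z

theorem cmi_eq_kl_condIndepLaw (hμ : ∀ ω, 0 ≤ μ ω) (X : Ω → α) (Y : Ω → β)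
    (Z : Ω → γ) :
    cmi μ X Y Z = kl (pushf μ fun ω => ((X ω, Y ω), Z ω)) (condIndepLaw μ X Y Z) := by
  have logb_density (ω : Ω) :
      μ ω * Real.logb 2 (pushf μ (fun ω => ((X ω, Y ω), Z ω)) ((X ω, Y ω), Z ω) /
          condIndepLaw μ X Y Z ((X ω, Y ω), Z ω)) =
        μ ω * Real.logb 2 (pushf μ (fun ω => ((X ω, Y ω), Z ω)) ((X ω, Y ω), Z ω)) +
          μ ω * Real.logb 2 (pushf μ Z (Z ω)) -
          μ ω * Real.logb 2 (pushf μ (fun ω => (X ω, Z ω)) (X ω, Z ω)) -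
          μ ω * Real.logb 2 (pushf μ (fun ω => (Y ω, Z ω)) (Y ω, Z ω)) := by
    obtain hω | hω := (hμ ω).eq_or_lt
    · simp [← hω]
    · have hXYZ := hω.trans_le (le_pushf_apply_self hμ (fun ω => ((X ω, Y ω), Z ω)) ω)
      have hXZ := hω.trans_le (le_pushf_apply_self hμ (fun ω => (X ω, Z ω)) ω)
      have hYZ := hω.trans_le (le_pushf_apply_self hμ (fun ω => (Y ω, Z ω)) ω)
      have hZ := hω.trans_le (le_pushf_apply_self hμ Z ω)
      rw [condIndepLaw, Real.logb_div hXYZ.ne' (by positivity),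
        Real.logb_div (by positivity) hZ.ne', Real.logb_mul hXZ.ne' hYZ.ne']
      ring
  rw [kl, sum_pushf_mul μ _ fun t => Real.logb 2 (_ / condIndepLaw μ X Y Z t)]
  simp only [logb_density, Finset.sum_add_distrib, Finset.sum_sub_distrib, cmi, centRV,
    entRV_eq_neg_sum_mul_logb]
  ring

theorem cmi_nonneg (hμ : ∀ ω, 0 ≤ μ ω) (X : Ω → α) (Y : Ω → β) (Z : Ω → γ) :
    0 ≤ cmi μ X Y Z := by
  rw [cmi_eq_kl_condIndepLaw hμ]
  refine kl_nonneg (pushf_nonneg hμ _) (condIndepLaw_nonneg hμ X Y Z)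
    (fun _ => pushf_eq_zero_of_condIndepLaw_eq_zero hμ X Y Z) ?_
  rw [sum_condIndepLaw, sum_pushf]

end CondIndepLaw

section JointEntropy

variable {Ω ι δ : Type*} {α : ι → Type*} [Fintype Ω] [DecidableEq ι] [Fintype δ]
  [∀ i, Fintype (α i)]

/-- The joint entropy `H(U_T, V)` of a subfamily of `U` and a side variable `V`. -/
noncomputable def jointEnt (μ : Ω → ℝ) (U : ∀ i, Ω → α i) (V : Ω → δ) (T : Finset ι) : ℝ :=
  entRV μ fun ω => ((fun i : {i // i ∈ T} => U i.1 ω), V ω)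

theorem entRV_eq_jointEnt {ε : Type*} [Fintype ε] (μ : Ω → ℝ) {U : ∀ i, Ω → α i} {V : Ω → δ}
    {T : Finset ι} {X : Ω → ε}
    (h : ∀ ω ω', X ω = X ω' ↔ (∀ i ∈ T, U i ω = U i ω') ∧ V ω = V ω') :
    entRV μ X = jointEnt μ U V T :=
  entRV_congr μ fun ω ω' => by simp [h, funext_iff]

theorem jointEnt_image {κ : Type*} [DecidableEq κ] (μ : Ω → ℝ) (U : ∀ i, Ω → α i) (V : Ω → δ)
    (f : κ → ι) (T : Finset κ) :
    jointEnt μ (fun k => U (f k)) V T = jointEnt μ U V (T.image f) :=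
  entRV_eq_jointEnt μ fun ω ω' => by simp [funext_iff]

theorem jointEnt_union_add_jointEnt_inter_le {μ : Ω → ℝ} (hμ : ∀ ω, 0 ≤ μ ω)
    (U : ∀ i, Ω → α i) (V : Ω → δ) (S T : Finset ι) :
    jointEnt μ U V (S ∪ T) + jointEnt μ U V (S ∩ T) ≤ jointEnt μ U V S + jointEnt μ U V T := by
  let R (T : Finset ι) (ω : Ω) (i : {i // i ∈ T}) : α i := U i ω
  let Z (ω : Ω) : (∀ i : {i // i ∈ S ∩ T}, α i) × δ := (R (S ∩ T) ω, V ω)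
  have hS : entRV μ (fun ω => (R S ω, Z ω)) = jointEnt μ U V S :=
    entRV_eq_jointEnt μ fun ω ω' => by
      simp only [R, Z, Prod.mk.injEq, funext_iff, Subtype.forall]; grind
  have hT : entRV μ (fun ω => (R T ω, Z ω)) = jointEnt μ U V T :=
    entRV_eq_jointEnt μ fun ω ω' => by
      simp only [R, Z, Prod.mk.injEq, funext_iff, Subtype.forall]; grind
  have hST : entRV μ (fun ω => ((R S ω, R T ω), Z ω)) = jointEnt μ U V (S ∪ T) :=
    entRV_eq_jointEnt μ fun ω ω' => by
      simp only [R, Z, Prod.mk.injEq, funext_iff, Subtype.forall]; grind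
  have hZ : entRV μ Z = jointEnt μ U V (S ∩ T) := rfl
  have h := cmi_nonneg hμ (R S) (R T) Z
  rw [cmi, centRV, centRV, centRV, hS, hT, hST, hZ] at h
  linarith

/-- The conditional mutual information `I(U_A; Y, U_{Aᶜ} | Z)` whose normalisation by `|A|` is
minimised; `Aᶜ` is encoded by the subtype `{i // i ∉ A}`. -/
noncomputable def complCMI [Fintype ι] {γ : Type*} [Fintype γ] (μ : Ω → ℝ) (U : ∀ i, Ω → α i)
    (Y : Ω → δ) (Z : Ω → γ) (A : Finset ι) : ℝ :=
  cmi μ (fun ω (i : {i // i ∈ A}) => U i.1 ω)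
    (fun ω => (Y ω, fun i : {i // i ∉ A} => U i.1 ω)) Z

variable [Fintype ι] {γ : Type*} [Fintype γ]

theorem complCMI_univ (μ : Ω → ℝ) (U : ∀ i, Ω → α i) (Y : Ω → δ) (Z : Ω → γ) :
    complCMI μ U Y Z Finset.univ = cmi μ (fun ω i => U i ω) Y Z :=
  cmi_congr μ Z (by simp [funext_iff]) (by simp [funext_iff])

theorem complCMI_eq_jointEnt (μ : Ω → ℝ) (U : ∀ i, Ω → α i) (Y : Ω → δ) (Z : Ω → γ)
    (A : Finset ι) :
    complCMI μ U Y Z A = jointEnt μ U Z A + jointEnt μ U (fun ω => (Y ω, Z ω)) Aᶜ -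
      jointEnt μ U (fun ω => (Y ω, Z ω)) Finset.univ - jointEnt μ U Z ∅ := by
  have hZ : entRV μ Z = jointEnt μ U Z ∅ := entRV_eq_jointEnt μ (by simp)
  have hAZ : entRV μ (fun ω => ((fun i : {i // i ∈ A} => U i.1 ω), Z ω)) = jointEnt μ U Z A := rfl
  have hYZ : entRV μ (fun ω => ((Y ω, fun i : {i // i ∉ A} => U i.1 ω), Z ω)) =
      jointEnt μ U (fun ω => (Y ω, Z ω)) Aᶜ :=
    entRV_eq_jointEnt μ fun ω ω' => by
      simp only [Prod.mk.injEq, funext_iff, Subtype.forall, Finset.mem_compl]; grind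
  have hAYZ : entRV μ (fun ω => (((fun i : {i // i ∈ A} => U i.1 ω), Y ω,
      fun i : {i // i ∉ A} => U i.1 ω), Z ω)) =
      jointEnt μ U (fun ω => (Y ω, Z ω)) Finset.univ :=
    entRV_eq_jointEnt μ fun ω ω' => by
      simp only [Prod.mk.injEq, funext_iff, Subtype.forall]; grind
  rw [complCMI, cmi, centRV, centRV, centRV, hZ, hAZ, hYZ, hAYZ]
  ring

end JointEntropy

section Exchangeable

variable {Ω ι α δ : Type*} [Fintype Ω]

/-- The joint law of `((U i)_i, V)` is invariant under permutations of the indices `i`. -/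
def ExchangeableWith (μ : Ω → ℝ) (U : ι → Ω → α) (V : Ω → δ) : Prop :=
  ∀ σ : Equiv.Perm ι, pushf μ (fun ω => ((fun i => U (σ i) ω), V ω)) =
    pushf μ fun ω => ((fun i => U i ω), V ω)

namespace ExchangeableWith

variable {μ : Ω → ℝ} {U : ι → Ω → α} {V : Ω → δ}

theorem comp {ε : Type*} (h : ExchangeableWith μ U V) (g : δ → ε) :
    ExchangeableWith μ U (g ∘ V) :=
  fun σ => pushf_comp_congr (h σ) (Prod.map id g)

variable [DecidableEq ι] [Fintype α] [Fintype δ]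

theorem jointEnt_factorsThrough_card (h : ExchangeableWith μ U V) :
    (jointEnt μ U V).FactorsThrough Finset.card := by
  intro S T hST
  obtain ⟨σ, rfl⟩ := Equiv.Perm.exists_map_finset_eq S T hST
  calc jointEnt μ U V S
      = jointEnt μ (fun i => U (σ i)) V S :=
        congrArg ent <| pushf_comp_congr (h σ).symm <|
          Prod.map (fun u (i : {i // i ∈ S}) => u i.1) id
    _ = jointEnt μ U V (S.map σ.toEmbedding) := by
      rw [jointEnt_image μ U V σ, Finset.map_eq_image, Equiv.coe_toEmbedding]

variable [Fintype ι]

theorem jointEnt_chord_le (h : ExchangeableWith μ U V) (hμ : ∀ ω, 0 ≤ μ ω)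
    (T : Finset ι) :
    T.card * jointEnt μ U V Finset.univ + (Fintype.card ι - T.card) * jointEnt μ U V ∅ ≤
      Fintype.card ι * jointEnt μ U V T :=
  chord_le_of_submodular_of_factorsThrough_card h.jointEnt_factorsThrough_card
    (jointEnt_union_add_jointEnt_inter_le hμ U V) T

theorem card_mul_cmi_le_card_mul_complCMI {γ : Type*} [Fintype γ] {Y : Ω → δ} {Z : Ω → γ}
    (h : ExchangeableWith μ U fun ω => (Y ω, Z ω)) (hμ : ∀ ω, 0 ≤ μ ω) (A : Finset ι) :
    A.card * cmi μ (fun ω i => U i ω) Y Z ≤ Fintype.card ι * complCMI μ U Y Z A := by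
  have chord_A := (h.comp Prod.snd).jointEnt_chord_le hμ A
  have chord_compl := h.jointEnt_chord_le hμ Aᶜ
  rw [Finset.card_compl, Nat.cast_sub A.card_le_univ] at chord_compl
  rw [← complCMI_univ, complCMI_eq_jointEnt, complCMI_eq_jointEnt, Finset.compl_univ]
  simp only [Function.comp_def] at chord_A
  linarith

end ExchangeableWith

end Exchangeable

/-- If the joint law of `(S, W, U_1, …, U_K, Y)` is invariant under every
permutation of the `U`-indices, then the minimum over nonempty `A ⊆ {1,…,K}`
of `(1/|A|)·I(U_A; Y, U_{K∖A} | S, W)` equals `(1/K)·I(U_{1..K}; Y | S, W)`. -/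
theorem min_normalized_cmi_exchangeable {Ω α β γ δ : Type*} [Fintype Ω]
    [Fintype α] [Fintype β] [Fintype γ] [Fintype δ]
    (μ : Ω → ℝ) (hμ : IsPMF μ) {K : ℕ} (hK : 0 < K)
    (S : Ω → β) (W : Ω → γ) (Y : Ω → δ) (U : Fin K → Ω → α)
    (hexch : ∀ σ : Equiv.Perm (Fin K),
      pushf μ (fun ω => (S ω, W ω, (fun i => U (σ i) ω), Y ω)) =
        pushf μ (fun ω => (S ω, W ω, (fun i => U i ω), Y ω))) :
    IsLeast
      { x : ℝ | ∃ A : Finset (Fin K), A.Nonempty ∧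
          x = (1 / (A.card : ℝ)) *
            cmi μ (fun ω => (fun a : {i : Fin K // i ∈ A} => U a.1 ω))
              (fun ω => (Y ω, (fun a : {i : Fin K // i ∉ A} => U a.1 ω)))
              (fun ω => (S ω, W ω)) }
      ((1 / (K : ℝ)) * cmi μ (fun ω => (fun i => U i ω)) Y (fun ω => (S ω, W ω))) := by
  have exch : ExchangeableWith μ U fun ω => (Y ω, S ω, W ω) := fun σ =>
    pushf_comp_congr (hexch σ) fun p => (p.2.2.1, p.2.2.2, p.1, p.2.1)
  constructor
  · refine ⟨Finset.univ, ⟨⟨0, hK⟩, Finset.mem_univ _⟩, ?_⟩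
    rw [← complCMI_univ, Finset.card_fin, complCMI]
  · rintro _ ⟨A, hA, rfl⟩
    have hK' : (0 : ℝ) < K := Nat.cast_pos.2 hK
    have hA' : (0 : ℝ) < A.card := Nat.cast_pos.2 hA.card_pos
    have h := exch.card_mul_cmi_le_card_mul_complCMI hμ.1 A
    rw [Fintype.card_fin, complCMI] at h
    rw [one_div_mul_eq_div, one_div_mul_eq_div, div_le_div_iff₀ hK' hA']
    linarith
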